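/- (Alternative Singleton bound.) If n > m, then for every F_{q^m}-linear code C ⊆ F_{q^m}^n of dimension k and every 1 ≤ r ≤ k, one has d_{R,r}(C) ≤ (m/n)(n − k) + m(r − 1) + 1; equivalently, n · (d_{R,r}(C) − m(r − 1) − 1) ≤ m(n − k). -/

import Mathlib

open Submodule Module

namespace RankPaper

variable {n : ℕ}

/-- The coordinatewise `q^i`-th power map on `Fqm^n`. -/
def qpowMap (q i : ℕ) {Fqm : Type} [Field Fqm] (v : Fin n → Fqm) : Fin n → Fqm :=
  fun j => v j ^ q ^ i

/-- The Galois closure `D* = Σ_{i=0}^{m-1} D^{q^i}` of a subspace (as the span of the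
union of the images of `D` under the coordinatewise `q^i`-power maps, `0 ≤ i < m`). -/
def galClosure (q m : ℕ) {Fqm : Type} [Field Fqm] (D : Submodule Fqm (Fin n → Fqm)) :
    Submodule Fqm (Fin n → Fqm) :=
  Submodule.span Fqm (⋃ i ∈ Finset.range m, qpowMap q i '' (D : Set (Fin n → Fqm)))

/-- `D` is Galois closed if `D = D*`. -/
def GaloisClosed (q m : ℕ) {Fqm : Type} [Field Fqm] (D : Submodule Fqm (Fin n → Fqm)) : Prop :=
  galClosure q m D = D

/-- Rank weight of a subspace: `wt_R(D) = dim_{Fqm} D*`. -/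
noncomputable def wtR (q m : ℕ) {Fqm : Type} [Field Fqm]
    (D : Submodule Fqm (Fin n → Fqm)) : ℕ :=
  finrank Fqm (galClosure q m D)

/-- Rank weight of a vector: `wt_R(c) = wt_R(span {c})`. -/
noncomputable def wtRv (q m : ℕ) {Fqm : Type} [Field Fqm] (c : Fin n → Fqm) : ℕ :=
  wtR q m (Submodule.span Fqm ({c} : Set (Fin n → Fqm)))

/-- Hamming weight of a subspace: the number of coordinates where some element is nonzero. -/
noncomputable def wtH {Fqm : Type} [Field Fqm] (D : Submodule Fqm (Fin n → Fqm)) : ℕ :=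
  {i : Fin n | ∃ d ∈ D, d i ≠ 0}.ncard

/-- `r`-th generalized rank weight of a linear code. -/
noncomputable def dR (q m : ℕ) {Fqm : Type} [Field Fqm]
    (C : Submodule Fqm (Fin n → Fqm)) (r : ℕ) : ℕ :=
  sInf { dv | ∃ V : Submodule Fqm (Fin n → Fqm),
    GaloisClosed q m V ∧ r ≤ finrank Fqm ↥(C ⊓ V) ∧ dv = finrank Fqm ↥V }

/-- `r`-th generalized Hamming weight of a linear code. -/
noncomputable def dH {Fqm : Type} [Field Fqm]
    (C : Submodule Fqm (Fin n → Fqm)) (r : ℕ) : ℕ :=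
  sInf { w | ∃ D : Submodule Fqm (Fin n → Fqm), D ≤ C ∧ finrank Fqm ↥D = r ∧ w = wtH D }

/-- `r`-th relative generalized rank weight of a nested code pair. -/
noncomputable def MR (q m : ℕ) {Fqm : Type} [Field Fqm]
    (C₁ C₂ : Submodule Fqm (Fin n → Fqm)) (r : ℕ) : ℕ :=
  sInf { dv | ∃ V : Submodule Fqm (Fin n → Fqm), GaloisClosed q m V ∧
    r ≤ finrank Fqm ↥(C₁ ⊓ V) - finrank Fqm ↥(C₂ ⊓ V) ∧ dv = finrank Fqm ↥V }

/-- Minimum rank distance of an arbitrary (possibly nonlinear) code. -/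
noncomputable def dRset (q m : ℕ) {Fqm : Type} [Field Fqm] (C : Set (Fin n → Fqm)) : ℕ :=
  sInf { w | ∃ c₁ ∈ C, ∃ c₂ ∈ C, c₁ ≠ c₂ ∧ w = wtRv q m (c₁ - c₂) }

/-- The linear functional `x ↦ Σ_j x_j y_j` (dot product with `y`). -/
def dotLin {K : Type} [Field K] (y : Fin n → K) : (Fin n → K) →ₗ[K] K :=
  ∑ j, y j • LinearMap.proj j

/-- Orthogonal complement of a subspace with respect to the standard bilinear form. -/
def perp {K : Type} [Field K] (L : Submodule K (Fin n → K)) : Submodule K (Fin n → K) :=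
  ⨅ y ∈ L, LinearMap.ker (dotLin y)

/-- The coordinatewise inclusion `Fq^n → Fqm^n`. -/
def embFq (Fq Fqm : Type) [Field Fq] [Field Fqm] [Algebra Fq Fqm] :
    (Fin n → Fq) →ₗ[Fq] (Fin n → Fqm) :=
  LinearMap.pi fun j => (Algebra.linearMap Fq Fqm).comp (LinearMap.proj j)

/-- `V_L = L ⊗ Fqm`, the `Fqm`-span of `L ⊆ Fq^n` inside `Fqm^n`. -/
def VL {Fq : Type} (Fqm : Type) [Field Fq] [Field Fqm] [Algebra Fq Fqm]
    (L : Submodule Fq (Fin n → Fq)) : Submodule Fqm (Fin n → Fqm) :=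
  Submodule.span Fqm (embFq Fq Fqm '' (L : Set (Fin n → Fq)))

/-- Rank-punctured code `C^L`: the image of `C` in `Fqm^n / V_{L^⊥}`. -/
noncomputable def punct {Fq Fqm : Type} [Field Fq] [Field Fqm] [Algebra Fq Fqm]
    (L : Submodule Fq (Fin n → Fq)) (C : Submodule Fqm (Fin n → Fqm)) :
    Submodule Fqm ((Fin n → Fqm) ⧸ VL Fqm (perp L)) :=
  Submodule.map (VL Fqm (perp L)).mkQ C

/-!
Since `V_L` is Galois closed of dimension at most `dim L`, it is enough to find a small `L ⊆ Fq^n`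
for which `C ∩ V_L` has dimension at least `r`. Over `Fq`, the code `C` has dimension `mk` and
`W^n` has dimension `nt` for a `t`-dimensional subspace `W ⊆ Fqm`, so as soon as `nt + mk > mn`
there is a nonzero codeword with all coordinates in `W`. Expanding it in a basis of `W` puts it in
some `V_L` with `dim L ≤ t`. Every further codeword lies in some `V_L` with `dim L ≤ m`, hence each
of the remaining `r - 1` dimensions costs at most `m`. The optimal `t` is `⌊m(n - k)/n⌋ + 1`.
-/

section VectorSpace

variable {K V : Type*} [DivisionRing K] [AddCommGroup V] [Module K V]

theorem exists_submodule_finrank_eq {t : ℕ} (ht : t ≤ finrank K V) :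
    ∃ W : Submodule K V, finrank K W = t := by
  obtain ⟨v, hv⟩ := exists_linearIndependent_of_le_finrank ht
  exact ⟨span K (Set.range v), by simpa using finrank_span_eq_card hv⟩

theorem finrank_pi_univ_const {ι : Type*} [Fintype ι] (W : Submodule K V)
    [FiniteDimensional K W] :
    finrank K (Submodule.pi (Set.univ : Set ι) fun _ ↦ W) = Fintype.card ι * finrank K W := by
  have hrange : LinearMap.range (W.subtype.compLeft ι) = Submodule.pi Set.univ fun _ ↦ W := by
    simp only [LinearMap.range_compLeft, Submodule.range_subtype]
  rw [← hrange, LinearMap.finrank_range_of_inj W.subtype_injective.comp_left, finrank_pi_fintype,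
    Finset.sum_const, Finset.card_univ, smul_eq_mul]

end VectorSpace

theorem exists_mem_ne_zero_forall_apply_mem {K E ι : Type*} [Field K] [Field E] [Algebra K E]
    [FiniteDimensional K E] [Fintype ι] (C : Submodule E (ι → E)) (W : Submodule K E)
    (hdim : finrank K E * Fintype.card ι <
      Fintype.card ι * finrank K W + finrank K E * finrank E C) :
    ∃ c ∈ C, c ≠ 0 ∧ ∀ j, c j ∈ W := by
  have hC : finrank K (C.restrictScalars K) = finrank K E * finrank E C :=
    (finrank_mul_finrank K E C).symm
  have hspace : finrank K (ι → E) = finrank K E * Fintype.card ι := by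
    simp [finrank_pi_fintype, mul_comm]
  have hmeet : ¬ Disjoint (Submodule.pi Set.univ fun _ ↦ W) (C.restrictScalars K) := fun hdisj ↦ by
    have hle := Submodule.finrank_add_finrank_le_of_disjoint hdisj
    rw [finrank_pi_univ_const, hC, hspace] at hle
    omega
  rw [Submodule.disjoint_def] at hmeet
  push Not at hmeet
  obtain ⟨c, hcW, hcC, hc⟩ := hmeet
  exact ⟨c, hcC, hc, fun j ↦ hcW j (Set.mem_univ j)⟩

section ExtensionOfScalars

variable {K E : Type} [Field K] [Field E] [Algebra K E]

theorem VL_span (s : Set (Fin n → K)) : VL E (span K s) = span E (embFq K E '' s) := by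
  rw [VL, ← Submodule.map_coe, Submodule.map_span, Submodule.span_span_of_tower]

theorem VL_mono {L₁ L₂ : Submodule K (Fin n → K)} (hL : L₁ ≤ L₂) : VL E L₁ ≤ VL E L₂ :=
  Submodule.span_mono (Set.image_mono hL)

theorem finrank_VL_le (L : Submodule K (Fin n → K)) : finrank E (VL E L) ≤ finrank K L := by
  obtain ⟨a, -, ha, -⟩ := Submodule.exists_fun_fin_finrank_span_eq K (L : Set (Fin n → K))
  replace ha : span K (Set.range a) = L := ha.trans (Submodule.span_eq L)
  calc finrank E (VL E L)
      = finrank E (span E (Set.range (embFq K E ∘ a))) := by rw [Set.range_comp, ← VL_span, ha]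
    _ ≤ finrank K L := (finrank_range_le_card _).trans_eq (by simp)

theorem algHom_comp_mem_VL (f : E →ₐ[K] E) {L : Submodule K (Fin n → K)} {v : Fin n → E}
    (hv : v ∈ VL E L) : f ∘ v ∈ VL E L := by
  induction hv using Submodule.span_induction with
  | mem v hv =>
    obtain ⟨a, ha, rfl⟩ := hv
    have hfix : f ∘ embFq K E a = embFq K E a := funext fun j ↦ f.commutes (a j)
    rw [hfix]
    exact Submodule.subset_span ⟨a, ha, rfl⟩
  | zero =>
    have hzero : f ∘ (0 : Fin n → E) = 0 := funext fun _ ↦ map_zero f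
    rw [hzero]
    exact zero_mem _
  | add v w _ _ hv hw =>
    have hadd : f ∘ (v + w) = f ∘ v + f ∘ w := funext fun j ↦ map_add f (v j) (w j)
    exact hadd ▸ add_mem hv hw
  | smul a v _ hv =>
    have hsmul : f ∘ (a • v) = f a • (f ∘ v) := funext fun j ↦ map_mul f a (v j)
    exact hsmul ▸ Submodule.smul_mem _ _ hv

theorem qpowMap_mem_VL [Finite K] (i : ℕ) {L : Submodule K (Fin n → K)} {v : Fin n → E}
    (hv : v ∈ VL E L) : qpowMap (Nat.card K) i v ∈ VL E L := by
  have := Fintype.ofFinite K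
  have hfrob : qpowMap (Nat.card K) i v = (FiniteField.frobeniusAlgHom K E ^ i) ∘ v := by
    rw [AlgHom.coe_pow, FiniteField.coe_frobeniusAlgHom, pow_iterate, Fintype.card_eq_nat_card]
    rfl
  exact hfrob ▸ algHom_comp_mem_VL _ hv

theorem le_galClosure (q : ℕ) {m : ℕ} (hm : 0 < m) (D : Submodule E (Fin n → E)) :
    D ≤ galClosure q m D := fun v hv ↦ by
  have hv0 : qpowMap q 0 v = v := funext fun j ↦ by simp [qpowMap]
  exact Submodule.subset_span (Set.mem_biUnion (Finset.mem_range.2 hm) ⟨v, hv, hv0⟩)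

theorem galoisClosed_VL [Finite K] {m : ℕ} (hm : 0 < m) (L : Submodule K (Fin n → K)) :
    GaloisClosed (Nat.card K) m (VL E L) := by
  refine le_antisymm (Submodule.span_le.2 (Set.iUnion₂_subset fun i _ ↦ ?_)) (le_galClosure _ hm _)
  exact Set.image_subset_iff.2 fun v hv ↦ qpowMap_mem_VL i hv

theorem dR_le_finrank_of_le_finrank_inf_VL [Finite K] {m r : ℕ} (hm : 0 < m)
    {C : Submodule E (Fin n → E)} {L : Submodule K (Fin n → K)}
    (hr : r ≤ finrank E ↥(C ⊓ VL E L)) : dR (Nat.card K) m C r ≤ finrank K L :=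
  calc dR (Nat.card K) m C r
      ≤ finrank E (VL E L) := Nat.sInf_le ⟨VL E L, galoisClosed_VL hm L, hr, rfl⟩
    _ ≤ finrank K L := finrank_VL_le L

theorem exists_mem_VL_of_forall_apply_mem (W : Submodule K E) [FiniteDimensional K W]
    {c : Fin n → E} (hc : ∀ j, c j ∈ W) :
    ∃ L : Submodule K (Fin n → K), finrank K L ≤ finrank K W ∧ c ∈ VL E L := by
  let b := finBasis K W
  let a : Fin (finrank K W) → Fin n → K := fun l j ↦ b.repr ⟨c j, hc j⟩ l
  have hexpand : c = ∑ l, (b l : E) • embFq K E (a l) := by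
    funext j
    calc c j = ((∑ l, a l j • b l : W) : E) := by rw [b.sum_repr]
      _ = (∑ l, (b l : E) • embFq K E (a l)) j := by
        simp [embFq, Algebra.smul_def, mul_comm]
  refine ⟨span K (Set.range a), (finrank_range_le_card a).trans_eq (Fintype.card_fin _), ?_⟩
  rw [VL_span, hexpand]
  exact Submodule.sum_mem _ fun l _ ↦
    Submodule.smul_mem _ _ (Submodule.subset_span (Set.mem_image_of_mem _ (Set.mem_range_self l)))

theorem exists_inf_VL_ne_bot [FiniteDimensional K E] (C : Submodule E (Fin n → E)) {t : ℕ}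
    (ht : t ≤ finrank K E) (hdim : finrank K E * n < n * t + finrank K E * finrank E C) :
    ∃ L : Submodule K (Fin n → K), finrank K L ≤ t ∧ C ⊓ VL E L ≠ ⊥ := by
  obtain ⟨W, rfl⟩ := exists_submodule_finrank_eq ht
  obtain ⟨c, hcC, hc, hcW⟩ :=
    exists_mem_ne_zero_forall_apply_mem C W (by rwa [Fintype.card_fin])
  obtain ⟨L, hL, hcL⟩ := exists_mem_VL_of_forall_apply_mem W hcW
  exact ⟨L, hL, (Submodule.ne_bot_iff _).2 ⟨c, ⟨hcC, hcL⟩, hc⟩⟩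

theorem exists_inf_VL_lt_inf_VL [FiniteDimensional K E] {C : Submodule E (Fin n → E)}
    {L : Submodule K (Fin n → K)} (hCL : ¬ C ≤ VL E L) :
    ∃ L' : Submodule K (Fin n → K),
      finrank K L' ≤ finrank K L + finrank K E ∧ C ⊓ VL E L < C ⊓ VL E L' := by
  obtain ⟨c, hcC, hcL⟩ := SetLike.not_le_iff_exists.1 hCL
  obtain ⟨M, hM, hcM⟩ :=
    exists_mem_VL_of_forall_apply_mem (⊤ : Submodule K E) fun j ↦ Submodule.mem_top (x := c j)
  rw [finrank_top] at hM
  refine ⟨L ⊔ M, (Submodule.finrank_add_le_finrank_add_finrank L M).trans (by gcongr), ?_⟩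
  refine SetLike.lt_iff_le_and_exists.2 ⟨inf_le_inf_left C (VL_mono le_sup_left), c, ?_, ?_⟩
  · exact ⟨hcC, VL_mono le_sup_right hcM⟩
  · exact fun hc ↦ hcL hc.2

theorem exists_lt_finrank_inf_VL [FiniteDimensional K E] (C : Submodule E (Fin n → E)) {t : ℕ}
    (ht : t ≤ finrank K E) (hdim : finrank K E * n < n * t + finrank K E * finrank E C)
    {s : ℕ} (hs : s < finrank E C) :
    ∃ L : Submodule K (Fin n → K),
      finrank K L ≤ t + finrank K E * s ∧ s < finrank E ↥(C ⊓ VL E L) := by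
  induction s with
  | zero =>
    obtain ⟨L, hL, hCL⟩ := exists_inf_VL_ne_bot C ht hdim
    exact ⟨L, hL, Submodule.one_le_finrank_iff.2 hCL⟩
  | succ s ih =>
    obtain ⟨L, hL, hsL⟩ := ih (by omega)
    rw [Nat.mul_succ]
    by_cases hCL : C ≤ VL E L
    · exact ⟨L, by omega, by rwa [inf_eq_left.2 hCL]⟩
    · obtain ⟨L', hL', hlt⟩ := exists_inf_VL_lt_inf_VL hCL
      have := Submodule.finrank_lt_finrank_of_lt hlt
      exact ⟨L', by omega, by omega⟩

theorem dR_le_add_mul [Finite K] [FiniteDimensional K E] (C : Submodule E (Fin n → E)) {t : ℕ}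
    (ht : t ≤ finrank K E) (hdim : finrank K E * n < n * t + finrank K E * finrank E C)
    {s : ℕ} (hs : s < finrank E C) :
    dR (Nat.card K) (finrank K E) C (s + 1) ≤ t + finrank K E * s := by
  obtain ⟨L, hL, hsL⟩ := exists_lt_finrank_inf_VL C ht hdim hs
  exact (dR_le_finrank_of_le_finrank_inf_VL finrank_pos hsL).trans hL

end ExtensionOfScalars

theorem stmt11_general (q m n k r : ℕ) (Fq Fqm : Type) [Field Fq] [Field Fqm] [Algebra Fq Fqm]
    [Finite Fqm] (hq : Nat.card Fq = q) (hm : finrank Fq Fqm = m)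
    (C : Submodule Fqm (Fin n → Fqm)) (hk : finrank Fqm C = k)
    (hr1 : 1 ≤ r) (hrk : r ≤ k) :
    (n : ℤ) * ((dR q m C r : ℤ) - (m : ℤ) * ((r : ℤ) - 1) - 1)
      ≤ (m : ℤ) * ((n : ℤ) - (k : ℤ)) := by
  have : Finite Fq := Finite.of_injective _ (algebraMap Fq Fqm).injective
  have hm0 : 0 < m := hm ▸ finrank_pos
  have hkn : k ≤ n := by simpa [hk] using Submodule.finrank_le C
  have hn : 0 < n := by omega
  obtain ⟨s, rfl⟩ := Nat.exists_eq_add_of_le' hr1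
  have hfloor_le : n * (m * (n - k) / n) ≤ m * (n - k) := Nat.mul_div_le _ _
  have hlt_floor : m * (n - k) < n * (m * (n - k) / n + 1) := Nat.lt_mul_div_succ _ hn
  have hfloor_lt : m * (n - k) / n < m :=
    Nat.div_lt_of_lt_mul (by rw [mul_comm n]; exact Nat.mul_lt_mul_of_pos_left (by omega) hm0)
  generalize m * (n - k) / n = t at *
  have hdim : m * n < n * (t + 1) + m * k :=
    calc m * n = m * (n - k) + m * k := by rw [← mul_add, Nat.sub_add_cancel hkn]
      _ < n * (t + 1) + m * k := by gcongr
  subst hq hm hk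
  have hdR := dR_le_add_mul C hfloor_lt hdim hrk
  zify [hkn] at hdR hfloor_le
  calc _ ≤ (n : ℤ) * t := by gcongr; push_cast; linarith
    _ ≤ _ := hfloor_le

/-- alternative Singleton bound: if `n > m`, then for every linear code
`C ⊆ Fqm^n` of dimension `k` and every `1 ≤ r ≤ k`,
`n · (d_{R,r}(C) − m(r−1) − 1) ≤ m(n − k)`. -/
theorem stmt11 (q m n k r : ℕ) (Fq Fqm : Type) [Field Fq] [Field Fqm] [Algebra Fq Fqm]
    [Finite Fqm] (hq : Nat.card Fq = q) (hm : finrank Fq Fqm = m) (hmn : m < n)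
    (C : Submodule Fqm (Fin n → Fqm)) (hk : finrank Fqm C = k)
    (hr1 : 1 ≤ r) (hrk : r ≤ k) :
    (n : ℤ) * ((dR q m C r : ℤ) - (m : ℤ) * ((r : ℤ) - 1) - 1)
      ≤ (m : ℤ) * ((n : ℤ) - (k : ℤ)) :=
  stmt11_general q m n k r Fq Fqm hq hm C hk hr1 hrk

end RankPaper
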